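/- Let D be a Dyck word of size n whose Dyck graph G = G(D) is abelian. Then for every number of colors ν ≥ 1 one has the identity in ℂ(q)[x_1,…,x_ν]: X_G(x_1,…,x_ν;q) = Σ_A q^{asc(A)} · e_{n−initial(A)}(x_1,…,x_ν) · e_{initial(A)}(x_1,…,x_ν), where the sum is over all acyclic orientations A of G and e_k denotes the k-th elementary symmetric polynomial. -/

import Mathlib

noncomputable section

/-- The base field `F = ℂ(q)`. -/
abbrev F : Type := RatFunc ℂ

/-- The indeterminate `q`. -/
def qq : F := RatFunc.X

/-- The `q`-integer `[j]_q = 1 + q + ⋯ + q^(j-1)`. -/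
def qint (j : ℕ) : F := ∑ i ∈ Finset.range j, qq ^ i

/-- The `q`-factorial `[j]_q! = [1]_q ⋯ [j]_q`. -/
def qfact (j : ℕ) : F := ∏ i ∈ Finset.range j, qint (i + 1)

/-- Modular relations defining the path algebra `𝒫`; the letter `true` is `𝗇`,
the letter `false` is `𝖾`. -/
inductive PathRel : FreeAlgebra F Bool → FreeAlgebra F Bool → Prop where
  | mod1 : PathRel
      ((1 + qq) • (FreeAlgebra.ι F false * FreeAlgebra.ι F true * FreeAlgebra.ι F false))
      (qq • (FreeAlgebra.ι F false * FreeAlgebra.ι F false * FreeAlgebra.ι F true) +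
        FreeAlgebra.ι F true * FreeAlgebra.ι F false * FreeAlgebra.ι F false)
  | mod2 : PathRel
      ((1 + qq) • (FreeAlgebra.ι F true * FreeAlgebra.ι F false * FreeAlgebra.ι F true))
      (qq • (FreeAlgebra.ι F false * FreeAlgebra.ι F true * FreeAlgebra.ι F true) +
        FreeAlgebra.ι F true * FreeAlgebra.ι F true * FreeAlgebra.ι F false)

/-- The path algebra `𝒫`. -/
abbrev PathAlg : Type := RingQuot PathRel

/-- The generator `𝗇` of `𝒫`. -/
def Pn : PathAlg := RingQuot.mkAlgHom F PathRel (FreeAlgebra.ι F true)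

/-- The generator `𝖾` of `𝒫`. -/
def Pe : PathAlg := RingQuot.mkAlgHom F PathRel (FreeAlgebra.ι F false)

/-- The element of `𝒫` determined by a word in `𝗇` (`true`) and `𝖾` (`false`). -/
def wordElem (w : List Bool) : PathAlg := (w.map fun b => if b then Pn else Pe).prod

/-- `𝒫_{m,n}`: the span of words with `m` letters `𝗇` and `n` letters `𝖾`. -/
def Pmn (m n : ℕ) : Submodule F PathAlg :=
  Submodule.span F {x | ∃ w : List Bool, w.count true = m ∧ w.count false = n ∧ x = wordElem w}

/-- `lam` (0-indexed list of parts) is a partition contained in the `m × n` box. -/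
def IsPartitionIn (m n : ℕ) (lam : ℕ → ℕ) : Prop :=
  (∀ i j, i ≤ j → lam j ≤ lam i) ∧ (∀ i, lam i ≤ n) ∧ (∀ i, m ≤ i → lam i = 0)

/-- `eastBefore w r` = number of east steps (`false`) preceding the `(r+1)`-st
north step (`true`) of `w`. -/
def eastBefore : List Bool → ℕ → ℕ
  | [], _ => 0
  | true :: _, 0 => 0
  | true :: w, r + 1 => eastBefore w r
  | false :: w, r => eastBefore w r + 1

/-- `northBefore w r` = number of north steps (`true`) preceding the `(r+1)`-st
east step (`false`) of `w`. -/
def northBefore : List Bool → ℕ → ℕ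
  | [], _ => 0
  | false :: _, 0 => 0
  | false :: w, r + 1 => northBefore w r
  | true :: w, r => northBefore w r + 1

/-- The partition `λ(w)` of a word with `m` letters `𝗇`, as a 0-indexed function:
row `i` (from the top) of the partition has `eastBefore w (m-1-i)` cells. -/
def wordLam (m : ℕ) (w : List Bool) : ℕ → ℕ :=
  fun i => if i < m then eastBefore w (m - 1 - i) else 0

/-- The word `w(λ)` of a partition `λ ⊆ m × n` (given as 0-indexed `lam : ℕ → ℕ`). -/
def wordOf (m n : ℕ) (lam : ℕ → ℕ) : List Bool :=
  ((List.range m).flatMap fun k =>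
    List.replicate (lam (m - 1 - k) - lam (m - k)) false ++ [true]) ++
    List.replicate (n - lam 0) false

/-- The rook in column `j` of the placement `ρ` lies inside the Ferrers board of `lam`. -/
def rookInside (m n : ℕ) (lam : ℕ → ℕ) (ρ : Fin n ↪ Fin m) (j : Fin n) : Prop :=
  (j : ℕ) < lam (ρ j)

/-- The cell in row `i` (0-indexed from the top) and column `j` (0-indexed from the left)
is unattacked for the maximal non-attacking rook placement `ρ` (with the Ferrers board of
`lam` drawn in the top-left corner of the `m × n` board). -/
def Unattacked (m n : ℕ) (lam : ℕ → ℕ) (ρ : Fin n ↪ Fin m) (i : Fin m) (j : Fin n) : Prop :=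
  ρ j ≠ i ∧ ¬ ((ρ j : ℕ) < (i : ℕ)) ∧
    (if (j : ℕ) < lam i then
      (∀ j' : Fin n, ρ j' = i → ¬ (j' < j)) ∧
      (∀ j' : Fin n, ρ j' = i → j < j' → (j' : ℕ) < lam i)
    else
      ∀ j' : Fin n, ρ j' = i → j' < j → (j' : ℕ) < lam i)

/-- `stat ρ` = number of unattacked cells. -/
def statRook (m n : ℕ) (lam : ℕ → ℕ) (ρ : Fin n ↪ Fin m) : ℕ :=
  Set.ncard {p : Fin m × Fin n | Unattacked m n lam ρ p.1 p.2}

/-- The `q`-hit number `H_k^{m,n}(λ)`. -/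
def qHit (m n : ℕ) (lam : ℕ → ℕ) (k : ℕ) : F :=
  ∑ ρ : Fin n ↪ Fin m,
    if Set.ncard {j : Fin n | rookInside m n lam ρ j} = k then qq ^ statRook m n lam ρ else 0

/-- A Dyck word of size `N`. -/
def IsDyck (N : ℕ) (w : List Bool) : Prop :=
  w.count true = N ∧ w.count false = N ∧
    ∀ p : ℕ, (w.take p).count false ≤ (w.take p).count true

/-- Adjacency of the Dyck graph `G(D)` of a Dyck word of size `N` on vertices `Fin N`
(0-indexed: vertex `a` is the vertex `a+1` of `{1,…,N}`). -/
def dyckAdj (N : ℕ) (w : List Bool) (a b : Fin N) : Prop :=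
  ((a : ℕ) < b ∧ (b : ℕ) < northBefore w a) ∨ ((b : ℕ) < a ∧ (a : ℕ) < northBefore w b)

/-- Proper colorings of the Dyck graph `G(w)` with `ν` colors. -/
def properColorings (N ν : ℕ) (w : List Bool) : Set (Fin N → Fin ν) :=
  {κ | ∀ a b : Fin N, dyckAdj N w a b → κ a ≠ κ b}

/-- Number of ascents of a coloring. -/
def ascColor (N ν : ℕ) (w : List Bool) (κ : Fin N → Fin ν) : ℕ :=
  Set.ncard {p : Fin N × Fin N | (p.1 : ℕ) < p.2 ∧ dyckAdj N w p.1 p.2 ∧ κ p.1 < κ p.2}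

open scoped Classical in
/-- The chromatic quasisymmetric polynomial `X_{G(w)}(x_1,…,x_ν; q)`. -/
def chromX (N ν : ℕ) (w : List Bool) : MvPolynomial (Fin ν) F :=
  ∑ κ : Fin N → Fin ν,
    if κ ∈ properColorings N ν w then
      MvPolynomial.C (qq ^ ascColor N ν w κ) * ∏ a : Fin N, MvPolynomial.X (κ a)
    else 0

/-- The staircase word `δ_k = 𝖾^{n-k}(𝗇𝖾)^k𝗇^{m-k}`. -/
def deltaWord (m n k : ℕ) : List Bool :=
  List.replicate (n - k) false ++ (List.replicate k [true, false]).flatten ++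
    List.replicate (m - k) true

/-- `m_w`: the largest `k` with `λ(w) ⊆ λ(δ_k)`, i.e. such that the path of `δ_k`
lies weakly below the path of `w`. -/
def mw (m n : ℕ) (w : List Bool) : ℕ :=
  Finset.sup ((Finset.range (min m n + 1)).filter fun k =>
    ∀ i ∈ Finset.range m, wordLam m w i ≤ wordLam m (deltaWord m n k) i) id

/-- The lattice paths of `w` and `d` share the unit step of `w` corresponding to
the letter at (0-indexed) position `p` of `w`. -/
def StepShared (w d : List Bool) (p : ℕ) : Prop :=
  ∃ p' : ℕ, p' < d.length ∧ d[p']? = w[p]? ∧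
    (d.take p').count true = (w.take p).count true ∧
    (d.take p').count false = (w.take p).count false

/-- `w` possesses a critical factor: a factor `𝗇^i𝖾` or `𝗇𝖾^i` with `i ≥ 2`, whose run of
repeated letters is maximal within `w`, and whose letters contain a unit step shared by
the lattice paths of `w` and of `δ_{m_w}`. -/
def HasCriticalFactor (m n : ℕ) (w : List Bool) : Prop :=
  ∃ (x y : List Bool) (i : ℕ), 2 ≤ i ∧
    ((w = x ++ (List.replicate i true ++ [false]) ++ y ∧ x.getLast? ≠ some true ∧
        ∃ p, x.length ≤ p ∧ p < x.length + i + 1 ∧ StepShared w (deltaWord m n (mw m n w)) p) ∨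
      (w = x ++ ([true] ++ List.replicate i false) ++ y ∧ y.head? ≠ some false ∧
        ∃ p, x.length ≤ p ∧ p < x.length + i + 1 ∧ StepShared w (deltaWord m n (mw m n w)) p))

/-- Evaluation of a (commutative) polynomial in two variables at the commuting elements
`s`, `t` of `𝒫`. -/
def evalST (s t : PathAlg) (P : MvPolynomial (Fin 2) F) : PathAlg :=
  ∑ d ∈ P.support, P.coeff d • (s ^ (d 0) * t ^ (d 1))

/-- The conjugate partition: `conjP m lam i = λ'_i = #{rows r : λ_r ≥ i}` (here `i ≥ 1`,
rows 0-indexed, `lam` supported on `[0, m)`). -/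
def conjP (m : ℕ) (lam : ℕ → ℕ) (i : ℕ) : ℕ :=
  ((Finset.range m).filter fun r => i ≤ lam r).card

/-- The sequence `b(λ) = (b_1,…,b_n)` (1-indexed `i`) for `λ ⊆ m × n`, `m ≥ n`. -/
def bSeq (m : ℕ) (lam : ℕ → ℕ) (i : ℕ) : ℤ :=
  if lam (m - i) < i then (m : ℤ) + 1 - i - conjP m lam i else (i : ℤ) - lam (m - i)

/-- The element `wt_i ∈ 𝒫`. -/
def wt (i : ℤ) : PathAlg :=
  if 1 ≤ i then qint i.toNat • (Pn * Pe) - (qq * qint (i - 1).toNat) • (Pe * Pn)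
  else (qq ^ i) • (qint (1 - i).toNat • (Pe * Pn) - qint (-i).toNat • (Pn * Pe))

/-- The defining relations of the `q`-Klyachko algebra. -/
def klyRels : Set (MvPolynomial ℤ F) :=
  {x | ∃ i : ℤ, x = MvPolynomial.C (1 + qq) * (MvPolynomial.X i * MvPolynomial.X i) -
    (MvPolynomial.C qq * (MvPolynomial.X i * MvPolynomial.X (i - 1)) +
      MvPolynomial.X i * MvPolynomial.X (i + 1))}

/-- The `q`-Klyachko algebra `𝒦`. -/
abbrev Kly : Type := MvPolynomial ℤ F ⧸ Ideal.span klyRels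

/-- The generator `u_i` of `𝒦`. -/
def uK (i : ℤ) : Kly := Ideal.Quotient.mk (Ideal.span klyRels) (MvPolynomial.X i)

/-- The element `u(λ) = u_{a_1} ⋯ u_{a_m}` of `𝒦`, where `a(λ)` is the area sequence
of `λ ⊆ m × m` (here `a_{i+1} = (i+1) - λ_{m-i}` with `lam` 0-indexed). -/
def uLam (m : ℕ) (lam : ℕ → ℕ) : Kly :=
  ∏ i ∈ Finset.range m, uK ((i : ℤ) + 1 - lam (m - 1 - i))

/-- The partition `λ(G(D))` of a Dyck word of size `N`, 0-indexed:
`λ_{i+1} = N - h_{i+1}(D)`. -/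
def lamG (N : ℕ) (D : List Bool) : ℕ → ℕ :=
  fun i => if i < N then N - northBefore D i else 0

/-- The number of nonzero parts of `λ(G(D))`. -/
def ellG (N : ℕ) (D : List Bool) : ℕ :=
  ((Finset.range N).filter fun i => N - northBefore D i ≠ 0).card

/-- The Dyck graph `G(D)` is abelian. -/
def IsAbelian (N : ℕ) (D : List Bool) : Prop := lamG N D 0 + ellG N D ≤ N

/-- `r` is an acyclic orientation of the graph with adjacency `adj` on `Fin N`. -/
def IsAcyclicOrientation (N : ℕ) (adj : Fin N → Fin N → Prop)
    (r : Fin N → Fin N → Bool) : Prop :=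
  (∀ a b, r a b = true → adj a b) ∧
  (∀ a b, adj a b → (r a b = true ↔ ¬ r b a = true)) ∧
  (∀ a, ¬ Relation.TransGen (fun u v => r u v = true) a a)

/-- Number of ascents of an orientation. -/
def ascOrient (N : ℕ) (r : Fin N → Fin N → Bool) : ℕ :=
  Set.ncard {p : Fin N × Fin N | r p.1 p.2 = true ∧ (p.1 : ℕ) < p.2}

/-- Remove from `S` the sources of the orientation restricted to `S`. -/
def peel (N : ℕ) (r : Fin N → Fin N → Bool) (S : Set (Fin N)) : Set (Fin N) :=
  {v ∈ S | ∃ u ∈ S, r u v = true}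

/-- Number of sources of the orientation restricted to `S`. -/
def numSources (N : ℕ) (r : Fin N → Fin N → Bool) (S : Set (Fin N)) : ℕ :=
  Set.ncard {v ∈ S | ∀ u ∈ S, ¬ r u v = true}

open scoped Classical in
/-- `initial(A)`: the number of leading entries of the source sequence equal to `2`. -/
def initialA (N : ℕ) (r : Fin N → Fin N → Bool) : ℕ :=
  Finset.sup ((Finset.range (N + 1)).filter fun j =>
    ∀ k < j, numSources N r ((peel N r)^[k] Set.univ) = 2) id

end

/-!
For a vertex set `V`, let `M V` be the sum of `q ^ asc` over the acyclic orientations of `G[V]`,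
and let `T_k` be the operator on functions of `V` that deletes an independent set of `k` vertices,
weighted by `q` to the number of edges it cuts in ascending direction.  Splitting off the lowest
color class computes the chromatic polynomial recursively from the `T_k`.  When `G` has no
independent set of three vertices only `T_1` and `T_2` survive, and for a natural unit interval
graph they commute.  If they are regarded as `e_1` and `e_2` of two formal variables, the recursion
becomes a dual Cauchy identity, an expansion in two-column Schur functions.

The orientations enter by splitting off sources instead of colors: inclusion–exclusion over the
set of sources gives `M - T_1 M + T_2 M = δ_∅`, and `T_2 ^ k M` counts the orientations whose
source sequence starts with `k` twos.  Hence the `k`-th two-column Schur function has coefficient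
`∑ q ^ asc A` over the `A` with `k ≤ initial A`, and by the Jacobi–Trudi identity the two-column
Schur functions with `k ≤ initial A` telescope to `e_{n - initial A} e_{initial A}`.
-/

noncomputable section

namespace AbelianChromatic

open Finset

section TwoColumnSchur

variable {R : Type*}

section CommSemiring

variable [CommSemiring R]

theorem esymm_cons_succ (m : Multiset R) (x : R) (k : ℕ) :
    (x ::ₘ m).esymm (k + 1) = m.esymm (k + 1) + x * m.esymm k := by
  simp only [Multiset.esymm, Multiset.powersetCard_cons, Multiset.map_add, Multiset.sum_add,
    Multiset.map_map, Function.comp_def, Multiset.prod_cons, Multiset.sum_map_mul_left]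

/-- The elementary symmetric function `e_j` of a multiset, extended by zero to `j < 0` so that
`intEsymm_cons` needs no boundary cases. -/
def intEsymm (m : Multiset R) : ℤ → R
  | .ofNat k => m.esymm k
  | .negSucc _ => 0

theorem intEsymm_natCast (m : Multiset R) (k : ℕ) : intEsymm m k = m.esymm k := rfl

theorem intEsymm_of_neg (m : Multiset R) {j : ℤ} (hj : j < 0) : intEsymm m j = 0 := by
  obtain ⟨k, rfl⟩ := Int.eq_negSucc_of_lt_zero hj
  rfl

theorem intEsymm_zero_left (j : ℤ) : intEsymm (0 : Multiset R) j = if j = 0 then 1 else 0 := by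
  match j with
  | .ofNat 0 => simp [intEsymm, Multiset.esymm]
  | .ofNat (k + 1) =>
    simp [intEsymm, Multiset.esymm, Multiset.powersetCard_zero_right, show (k : ℤ) + 1 ≠ 0 by lia]
  | .negSucc k => simp [intEsymm]

theorem intEsymm_cons (m : Multiset R) (x : R) (j : ℤ) :
    intEsymm (x ::ₘ m) j = intEsymm m j + x * intEsymm m (j - 1) := by
  match j with
  | .ofNat 0 =>
    rw [intEsymm_of_neg m (j := _ - 1) (by simp)]
    simp [intEsymm, Multiset.esymm]
  | .ofNat (k + 1) =>
    rw [show Int.ofNat (k + 1) - 1 = k by simp]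
    exact esymm_cons_succ m x k
  | .negSucc k => simp [intEsymm, Int.negSucc_sub_one]

end CommSemiring

variable [CommRing R]

/-- The Schur function `s_λ` of the two-column partition `λ = 2^k 1^(n-2k)`, by the dual
Jacobi–Trudi formula; it is evaluated also where `λ` is not a partition. -/
def twoColumnSchur (m : Multiset R) (n k : ℤ) : R :=
  intEsymm m (n - k) * intEsymm m k - intEsymm m (n - k + 1) * intEsymm m (k - 1)

theorem twoColumnSchur_cons (m : Multiset R) (x : R) (n k : ℤ) :
    twoColumnSchur (x ::ₘ m) n k = twoColumnSchur m n k +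
      x * (twoColumnSchur m (n - 1) k + twoColumnSchur m (n - 1) (k - 1)) +
      x ^ 2 * twoColumnSchur m (n - 2) (k - 1) := by
  simp only [twoColumnSchur, intEsymm_cons]
  rw [show n - 1 - k = n - k - 1 by ring, show n - k - 1 + 1 = n - k by ring,
    show n - k + 1 - 1 = n - k by ring, show n - 1 - (k - 1) = n - k by ring,
    show n - 2 - (k - 1) = n - k - 1 by ring, show n - k - 1 + 1 = n - k by ring]
  ring

theorem twoColumnSchur_zero_left {n : ℤ} (hn : n ≠ 0) (k : ℤ) :
    twoColumnSchur (0 : Multiset R) n k = 0 := by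
  simp only [twoColumnSchur, intEsymm_zero_left]
  grind

theorem twoColumnSchur_of_neg (m : Multiset R) (n : ℤ) {k : ℤ} (hk : k < 0) :
    twoColumnSchur m n k = 0 := by
  simp [twoColumnSchur, intEsymm_of_neg m hk, intEsymm_of_neg m (show k - 1 < 0 by lia)]

theorem twoColumnSchur_two_mul_sub_one (m : Multiset R) (k : ℤ) :
    twoColumnSchur m (2 * k - 1) k = 0 := by
  rw [twoColumnSchur, show 2 * k - 1 - k = k - 1 by ring, sub_add_cancel, mul_comm, sub_self]

theorem sum_range_twoColumnSchur (m : Multiset R) (n : ℤ) (i : ℕ) :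
    ∑ k ∈ range (i + 1), twoColumnSchur m n k = intEsymm m (n - i) * intEsymm m i := by
  induction i with
  | zero => simp [twoColumnSchur, intEsymm_of_neg m (show (-1 : ℤ) < 0 by simp)]
  | succ i ih =>
    rw [sum_range_succ, ih, twoColumnSchur, show n - (i + 1 : ℕ) + 1 = n - i by push_cast; ring,
      show ((i + 1 : ℕ) : ℤ) - 1 = i by simp]
    ring

end TwoColumnSchur

section IndepRemoval

variable {α : Type*} [LinearOrder α] (G : SimpleGraph α) [DecidableRel G.Adj]

/-- The number of edges of `G` that ascend from `S` to `T`. -/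
def ascents (S T : Finset α) : ℕ :=
  #{p ∈ S ×ˢ T | p.1 < p.2 ∧ G.Adj p.1 p.2}

theorem ascents_eq_sum (S T : Finset α) :
    ascents G S T = ∑ s ∈ S, ∑ t ∈ T, if s < t ∧ G.Adj s t then 1 else 0 := by
  rw [ascents, card_filter, sum_product]

@[simp]
theorem ascents_empty_left (T : Finset α) : ascents G ∅ T = 0 := by
  simp [ascents_eq_sum]

theorem ascents_union_left {S S' : Finset α} (h : Disjoint S S') (T : Finset α) :
    ascents G (S ∪ S') T = ascents G S T + ascents G S' T := by
  simp only [ascents_eq_sum, sum_union h]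

theorem ascents_union_right (S : Finset α) {T T' : Finset α} (h : Disjoint T T') :
    ascents G S (T ∪ T') = ascents G S T + ascents G S T' := by
  simp only [ascents_eq_sum, sum_union h, sum_add_distrib]

theorem ascents_sdiff_add_ascents_sdiff_union {S S' V : Finset α} (hS' : S' ⊆ V \ S) :
    ascents G S (V \ S) + ascents G S' (V \ (S ∪ S')) =
      ascents G (S ∪ S') (V \ (S ∪ S')) + ascents G S S' := by
  have hV : V \ S = S' ∪ V \ (S ∪ S') := by
    rw [show V \ (S ∪ S') = (V \ S) \ S' from sdiff_sdiff_left.symm, union_sdiff_of_subset hS']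
  have hdisj : Disjoint S' (V \ (S ∪ S')) := disjoint_sdiff.mono_left subset_union_right
  rw [hV, ascents_union_right G S hdisj,
    ascents_union_left G (disjoint_sdiff.mono_right hS')]
  ring

variable {R : Type*} [CommSemiring R] (q : R)

/-- The operator on functions of vertex sets that removes an independent set of size `j` from
the bottom of its argument, weighted by the ascents from the removed set to the rest. -/
def removeIndep (j : ℕ) : Module.End R (Finset α → R) where
  toFun f V := ∑ S ∈ V.powerset with G.IsNIndepSet j S, q ^ ascents G S (V \ S) * f (V \ S)
  map_add' f g := by
    ext V
    simp only [Pi.add_apply, mul_add, sum_add_distrib]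
  map_smul' c f := by
    ext V
    simp only [Pi.smul_apply, smul_eq_mul, mul_sum, RingHom.id_apply]
    exact sum_congr rfl fun S _ ↦ mul_left_comm ..

theorem removeIndep_apply (j : ℕ) (f : Finset α → R) (V : Finset α) :
    removeIndep G q j f V =
      ∑ S ∈ V.powerset with G.IsNIndepSet j S, q ^ ascents G S (V \ S) * f (V \ S) := rfl

theorem removeIndep_zero : removeIndep G q 0 = 1 := by
  ext f V
  have : {S ∈ V.powerset | G.IsNIndepSet 0 S} = {∅} := by
    ext S
    simp +contextual [SimpleGraph.isNIndepSet_iff, iff_def]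
  simp [removeIndep_apply, this]

theorem removeIndep_mul_card (j : ℕ) (g : ℤ → R) (f : Finset α → R) (V : Finset α) :
    removeIndep G q j (fun W ↦ g #W * f W) V = g (#V - j) * removeIndep G q j f V := by
  rw [removeIndep_apply, removeIndep_apply, mul_sum]
  refine sum_congr rfl fun S hS ↦ ?_
  obtain ⟨hSV, -, hcard⟩ := by simpa [SimpleGraph.isNIndepSet_iff] using hS
  rw [cast_card_sdiff hSV, hcard, mul_left_comm]

theorem removeIndep_pow_apply_eq_zero {j k : ℕ} {f : Finset α → R} {V : Finset α}
    (hf : ∀ W : Finset α, #W + j * k = #V → f W = 0) : (removeIndep G q j ^ k) f V = 0 := by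
  induction k generalizing V with
  | zero => exact hf V rfl
  | succ k ih =>
    rw [pow_succ', Module.End.mul_apply, removeIndep_apply]
    refine sum_eq_zero fun S hS ↦ ?_
    obtain ⟨hSV, -, hcard⟩ := by simpa [SimpleGraph.isNIndepSet_iff] using hS
    have hle := card_le_card hSV
    rw [ih fun W hW ↦ hf W ?_, mul_zero]
    rw [card_sdiff_of_subset hSV] at hW
    lia

/-- The weighted number of ways to split `U` into an independent set of size `i` below an
independent set of size `j`. -/
def splitSum (i j : ℕ) (U : Finset α) : R :=
  ∑ S ∈ U.powerset with G.IsNIndepSet i S ∧ G.IsNIndepSet j (U \ S), q ^ ascents G S (U \ S)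

theorem removeIndep_removeIndep_apply (i j : ℕ) (f : Finset α → R) (V : Finset α) :
    removeIndep G q i (removeIndep G q j f) V =
      ∑ U ∈ V.powersetCard (i + j), q ^ ascents G U (V \ U) * f (V \ U) * splitSum G q i j U := by
  simp only [removeIndep_apply, splitSum, mul_sum]
  rw [sum_sigma', sum_sigma']
  refine sum_bij' (fun p _ ↦ ⟨p.1 ∪ p.2, p.1⟩) (fun p _ ↦ ⟨p.2, p.1 \ p.2⟩) ?_ ?_ ?_ ?_ ?_ <;>
    rintro ⟨X, Y⟩ h <;>
    simp only [mem_sigma, mem_filter, mem_powerset, mem_powersetCard] at h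
  · obtain ⟨⟨hX, hXi⟩, hY, hYj⟩ := h
    have hdisj : Disjoint X Y := disjoint_sdiff.mono_right hY
    simp only [mem_sigma, mem_filter, mem_powerset, mem_powersetCard, union_sdiff_cancel_left hdisj,
      card_union_of_disjoint hdisj, hXi.card_eq, hYj.card_eq]
    exact ⟨⟨union_subset hX (hY.trans sdiff_subset), trivial⟩, subset_union_left, hXi, hYj⟩
  · obtain ⟨⟨hX, -⟩, hY, hYi, hYj⟩ := h
    simp only [mem_sigma, mem_filter, mem_powerset]
    exact ⟨⟨hY.trans hX, hYi⟩, sdiff_subset_sdiff hX subset_rfl, hYj⟩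
  · rw [union_sdiff_cancel_left (disjoint_sdiff.mono_right h.2.1)]
  · simp only [union_sdiff_of_subset h.2.1]
  · have hdisj : Disjoint X Y := disjoint_sdiff.mono_right h.2.1
    simp only [sdiff_sdiff_left, sup_eq_union, union_sdiff_cancel_left hdisj]
    rw [← mul_assoc, ← pow_add, ascents_sdiff_add_ascents_sdiff_union G h.2.1, pow_add]
    ring

/-- `G` is the incomparability graph of a natural unit interval order: the vertices between two
adjacent ones are adjacent to both. -/
def IsNaturalUnitInterval (G : SimpleGraph α) : Prop :=
  ∀ ⦃a b c⦄, a < b → b < c → G.Adj a c → G.Adj a b ∧ G.Adj b c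

theorem exists_lt_lt_of_card_eq_three {U : Finset α} (hU : #U = 3) :
    ∃ a b c, a < b ∧ b < c ∧ U = {a, b, c} := by
  refine ⟨U.orderEmbOfFin hU 0, U.orderEmbOfFin hU 1, U.orderEmbOfFin hU 2, by simp, by simp,
    (image_orderEmbOfFin_univ U hU).symm.trans ?_⟩
  simp [Fin.univ_succ, image_insert]

theorem splitSum_one_left {j : ℕ} {U : Finset α} (hU : #U = 1 + j) :
    splitSum G q 1 j U =
      ∑ v ∈ U with G.IsIndepSet ↑(U.erase v), q ^ ascents G {v} (U.erase v) := by
  refine (sum_bij (fun v _ ↦ {v}) ?_ (by simp) ?_ (by simp [sdiff_singleton_eq_erase])).symm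
  · intro v hv
    simp_all [SimpleGraph.isNIndepSet_iff, sdiff_singleton_eq_erase]
  · intro S hS
    simp only [mem_filter, mem_powerset, SimpleGraph.isNIndepSet_iff] at hS
    obtain ⟨v, rfl⟩ := card_eq_one.1 hS.2.1.2
    exact ⟨v, by simp_all [sdiff_singleton_eq_erase]⟩

theorem splitSum_one_right {i : ℕ} {U : Finset α} (hU : #U = i + 1) :
    splitSum G q i 1 U =
      ∑ v ∈ U with G.IsIndepSet ↑(U.erase v), q ^ ascents G (U.erase v) {v} := by
  refine (sum_bij (fun v _ ↦ U.erase v) ?_ ?_ ?_ ?_).symm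
  · intro v hv
    rw [mem_filter] at hv
    simp [SimpleGraph.isNIndepSet_iff, -coe_erase, hv, hU, card_erase_of_mem, sdiff_erase_self,
      erase_subset]
  · intro v hv w _ h
    exact (erase_inj U (mem_filter.1 hv).1).1 h
  · intro S hS
    simp only [mem_filter, mem_powerset, SimpleGraph.isNIndepSet_iff] at hS
    obtain ⟨v, hv⟩ := card_eq_one.1 hS.2.2.2
    have hvU : v ∈ U := sdiff_subset (hv ▸ mem_singleton_self v)
    have hS' : U.erase v = S := by
      rw [← sdiff_singleton_eq_erase, ← hv, Finset.sdiff_sdiff_eq_self hS.1]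
    exact ⟨v, by simp_all⟩
  · intro v hv
    rw [sdiff_erase_self (mem_filter.1 hv).1]

variable {G}

theorem IsNaturalUnitInterval.splitSum_one_two (hG : IsNaturalUnitInterval G)
    {U : Finset α} (hU : #U = 3) : splitSum G q 1 2 U = splitSum G q 2 1 U := by
  rw [splitSum_one_left G q hU, splitSum_one_right G q hU]
  obtain ⟨a, b, c, hab, hbc, rfl⟩ := exists_lt_lt_of_card_eq_three hU
  have hac := hab.trans hbc
  have ha : ({a, b, c} : Finset α).erase a = {b, c} := by grind
  have hb : ({a, b, c} : Finset α).erase b = {a, c} := by grind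
  have hc : ({a, b, c} : Finset α).erase c = {a, b} := by grind
  have hG' := hG hab hbc
  have hpair {x y : α} (hxy : x < y) : G.IsIndepSet ↑({x, y} : Finset α) ↔ ¬ G.Adj x y := by
    simp [SimpleGraph.IsIndepSet, Set.pairwise_pair, hxy.ne, G.adj_comm y]
  simp only [sum_filter, sum_insert, mem_insert, mem_singleton, sum_singleton, hab.ne, hac.ne,
    hbc.ne, or_self, not_false_eq_true, ha, hb, hc, hpair, hab, hac, hbc, ascents_eq_sum,
    hab.not_gt, hac.not_gt, hbc.not_gt, true_and, false_and, if_false, add_zero, zero_add]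
  by_cases h₁ : G.Adj a b <;> by_cases h₂ : G.Adj b c <;> by_cases h₃ : G.Adj a c <;>
    simp_all [add_comm]

theorem IsNaturalUnitInterval.commute_removeIndep (hG : IsNaturalUnitInterval G) :
    Commute (removeIndep G q 1) (removeIndep G q 2) := by
  ext f V
  rw [Module.End.mul_apply, Module.End.mul_apply, removeIndep_removeIndep_apply,
    removeIndep_removeIndep_apply]
  refine sum_congr rfl fun U hU ↦ ?_
  rw [hG.splitSum_one_two q (mem_powersetCard.1 hU).2]

end IndepRemoval

section IndepSubsets

variable {α : Type*} [LinearOrder α] (G : SimpleGraph α) [DecidableRel G.Adj]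

/-- The independent sets of `G` contained in `V`. -/
def indepSubsets (V : Finset α) : Finset (Finset α) :=
  V.powerset.filter fun S ↦ G.IsIndepSet S

variable {G} in
theorem mem_indepSubsets {S V : Finset α} : S ∈ indepSubsets G V ↔ S ⊆ V ∧ G.IsIndepSet S := by
  rw [indepSubsets, mem_filter, mem_powerset]

variable {G} in
theorem card_lt_of_mem_indepSubsets {m : ℕ} (hG : G.IndepSetFree m) {S V : Finset α}
    (hS : S ∈ indepSubsets G V) : #S < m := by
  by_contra hm
  obtain ⟨T, hTS, hT⟩ := exists_subset_card_eq (not_lt.1 hm)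
  exact hG T ⟨(mem_indepSubsets.1 hS).2.mono (coe_subset.2 hTS), hT⟩

variable {G} in
theorem sum_indepSubsets_pow_card_mul {R : Type*} [CommSemiring R] {m : ℕ}
    (hG : G.IndepSetFree m) (q x : R) (f : Finset α → R) (V : Finset α) :
    ∑ S ∈ indepSubsets G V, x ^ #S * (q ^ ascents G S (V \ S) * f (V \ S)) =
      ∑ j ∈ range m, x ^ j * removeIndep G q j f V := by
  rw [← sum_fiberwise_of_maps_to fun S hS ↦ mem_range.2 (card_lt_of_mem_indepSubsets hG hS)]
  refine sum_congr rfl fun j _ ↦ ?_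
  have hfiber : {S ∈ indepSubsets G V | #S = j} = {S ∈ V.powerset | G.IsNIndepSet j S} := by
    ext S
    simp only [mem_filter, mem_indepSubsets, mem_powerset, SimpleGraph.isNIndepSet_iff, and_assoc]
  rw [hfiber, removeIndep_apply, mul_sum]
  exact sum_congr rfl fun S hS ↦ by rw [(mem_filter.1 hS).2.card_eq]

end IndepSubsets

section Coloring

variable {α σ R : Type*} [LinearOrder α] [CommSemiring R]

theorem prod_apply_piecewise_const (x : σ → R) (κ : α → σ) (c : σ) {S V : Finset α}
    (hSV : S ⊆ V) :
    ∏ a ∈ V, x (S.piecewise (fun _ ↦ c) κ a) = x c ^ #S * ∏ a ∈ V \ S, x (κ a) := by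
  rw [← prod_sdiff hSV, mul_comm]
  congr 1
  · exact prod_eq_pow_card fun a ha ↦ by rw [piecewise_eq_of_mem _ _ _ ha]
  · exact prod_congr rfl fun a ha ↦ by rw [piecewise_eq_of_notMem _ _ _ (mem_sdiff.1 ha).2]

variable [LinearOrder σ] (G : SimpleGraph α) [DecidableRel G.Adj]

/-- The number of edges of `G` inside `V` along which the coloring `κ` ascends. -/
def colorAscents (κ : α → σ) (V : Finset α) : ℕ :=
  #{p ∈ V ×ˢ V | p.1 < p.2 ∧ G.Adj p.1 p.2 ∧ κ p.1 < κ p.2}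

theorem colorAscents_eq_sum (κ : α → σ) (V : Finset α) :
    colorAscents G κ V =
      ∑ a ∈ V, ∑ b ∈ V, if a < b ∧ G.Adj a b ∧ κ a < κ b then 1 else 0 := by
  rw [colorAscents, card_filter, sum_product]

theorem colorAscents_piecewise {κ : α → σ} {c : σ} {S V : Finset α} (hSV : S ⊆ V)
    (hκ : ∀ a ∈ V \ S, c < κ a) :
    colorAscents G (S.piecewise (fun _ ↦ c) κ) V =
      ascents G S (V \ S) + colorAscents G κ (V \ S) := by
  have hin {a} (ha : a ∈ S) : S.piecewise (fun _ ↦ c) κ a = c := piecewise_eq_of_mem _ _ _ ha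
  have hout {a} (ha : a ∈ V \ S) : S.piecewise (fun _ ↦ c) κ a = κ a :=
    piecewise_eq_of_notMem _ _ _ (mem_sdiff.1 ha).2
  have hrow_in {a} (ha : a ∈ S) :
      (∑ b ∈ V, if a < b ∧ G.Adj a b ∧ S.piecewise (fun _ ↦ c) κ a < S.piecewise (fun _ ↦ c) κ b
        then 1 else 0) = ∑ b ∈ V \ S, if a < b ∧ G.Adj a b then 1 else 0 := by
    rw [← sum_sdiff hSV, sum_eq_zero (s := S) fun b hb ↦ by simp [hin ha, hin hb], add_zero]
    exact sum_congr rfl fun b hb ↦ by simp [hin ha, hout hb, hκ b hb]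
  have hrow_out {a} (ha : a ∈ V \ S) :
      (∑ b ∈ V, if a < b ∧ G.Adj a b ∧ S.piecewise (fun _ ↦ c) κ a < S.piecewise (fun _ ↦ c) κ b
        then 1 else 0) = ∑ b ∈ V \ S, if a < b ∧ G.Adj a b ∧ κ a < κ b then 1 else 0 := by
    rw [← sum_sdiff hSV, sum_eq_zero (s := S) fun b hb ↦ by
      simp [hout ha, hin hb, (hκ a ha).not_gt], add_zero]
    exact sum_congr rfl fun b hb ↦ by rw [hout ha, hout hb]
  rw [colorAscents_eq_sum, ← sum_sdiff hSV, add_comm, sum_congr rfl fun a ↦ hrow_in,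
    sum_congr rfl fun a ↦ hrow_out, ← ascents_eq_sum, ← colorAscents_eq_sum]

variable [Fintype α]

/-- The proper colorings of the subgraph of `G` induced on `V` with colors in `s`, encoded as
functions on all vertices that take the value `d` outside `V`. -/
def properColoringsOn (d : σ) (s : Finset σ) (V : Finset α) : Finset (α → σ) :=
  {κ ∈ Fintype.piFinset fun a ↦ if a ∈ V then s else {d} |
    ∀ a ∈ V, ∀ b ∈ V, G.Adj a b → κ a ≠ κ b}

variable {G} in
theorem mem_properColoringsOn {d : σ} {s : Finset σ} {V : Finset α} {κ : α → σ} :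
    κ ∈ properColoringsOn G d s V ↔
      (∀ a ∈ V, κ a ∈ s) ∧ (∀ a ∉ V, κ a = d) ∧ ∀ a ∈ V, ∀ b ∈ V, G.Adj a b → κ a ≠ κ b := by
  rw [properColoringsOn, mem_filter, Fintype.mem_piFinset, ← and_assoc, and_congr_left_iff,
    ← forall_and]
  refine fun _ ↦ forall_congr' fun a ↦ ?_
  by_cases ha : a ∈ V <;> simp [ha]

/-- The chromatic quasisymmetric polynomial of the subgraph of `G` induced on `V`, with colors
in `s`, evaluated at `x`. -/
def chromaticSum (q : R) (x : σ → R) (d : σ) (s : Finset σ) (V : Finset α) : R :=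
  ∑ κ ∈ properColoringsOn G d s V, q ^ colorAscents G κ V * ∏ a ∈ V, x (κ a)

theorem chromaticSum_empty_colors (q : R) (x : σ → R) (d : σ) :
    chromaticSum G q x d ∅ = Pi.single ∅ 1 := by
  ext V
  obtain rfl | ⟨a, ha⟩ := V.eq_empty_or_nonempty
  · have : properColoringsOn G d ∅ ∅ = {fun _ ↦ d} := by
      ext κ
      simp [mem_properColoringsOn, funext_iff]
    simp [chromaticSum, this, colorAscents]
  · have : properColoringsOn G d ∅ V = ∅ :=
      eq_empty_of_forall_notMem fun κ hκ ↦ notMem_empty _ ((mem_properColoringsOn.1 hκ).1 a ha)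
    rw [chromaticSum, this, sum_empty, Pi.single_eq_of_ne (ne_empty_of_mem ha)]

theorem piecewise_mem_properColoringsOn {d c : σ} {s : Finset σ} (hc : c ∉ s) {S V : Finset α}
    (hS : S ∈ indepSubsets G V) {κ : α → σ} (hκ : κ ∈ properColoringsOn G d s (V \ S)) :
    S.piecewise (fun _ ↦ c) κ ∈ properColoringsOn G d (insert c s) V := by
  obtain ⟨hSV, hS⟩ := mem_indepSubsets.1 hS
  obtain ⟨hs, hd, hproper⟩ := mem_properColoringsOn.1 hκ
  simp only [mem_sdiff, not_and, not_not] at hs hd hproper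
  refine mem_properColoringsOn.2 ⟨fun a ha ↦ ?_, fun a ha ↦ ?_, fun a ha b hb hadj ↦ ?_⟩
  · by_cases haS : a ∈ S <;> simp [haS, hs, ha]
  · have haS : a ∉ S := fun h ↦ ha (hSV h)
    simp [haS, hd a fun h ↦ absurd h ha]
  · by_cases haS : a ∈ S <;> by_cases hbS : b ∈ S
    · exact absurd hadj (hS haS hbS hadj.ne)
    · simpa [haS, hbS] using fun h : c = κ b ↦ hc (h ▸ hs b ⟨hb, hbS⟩)
    · simpa [haS, hbS] using fun h : κ a = c ↦ hc (h ▸ hs a ⟨ha, haS⟩)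
    · simpa [haS, hbS] using hproper a ⟨ha, haS⟩ b ⟨hb, hbS⟩ hadj

theorem filter_eq_mem_indepSubsets {d c : σ} {s : Finset σ} {V : Finset α} {κ : α → σ}
    (hκ : κ ∈ properColoringsOn G d s V) : {a ∈ V | κ a = c} ∈ indepSubsets G V := by
  refine mem_indepSubsets.2 ⟨filter_subset .., fun a ha b hb _ hadj ↦ ?_⟩
  obtain ⟨ha, hac⟩ := mem_filter.1 (mem_coe.1 ha)
  obtain ⟨hb, hbc⟩ := mem_filter.1 (mem_coe.1 hb)
  exact (mem_properColoringsOn.1 hκ).2.2 a ha b hb hadj (hac.trans hbc.symm)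

theorem filter_piecewise_eq {d c : σ} {s : Finset σ} (hc : c ∉ s) {S V : Finset α} (hSV : S ⊆ V)
    {κ : α → σ} (hκ : κ ∈ properColoringsOn G d s (V \ S)) :
    {a ∈ V | S.piecewise (fun _ ↦ c) κ a = c} = S := by
  ext a
  by_cases haS : a ∈ S
  · simp [haS, hSV haS]
  · have hmem : a ∈ V → κ a ∈ s := fun haV ↦
      (mem_properColoringsOn.1 hκ).1 a (mem_sdiff.2 ⟨haV, haS⟩)
    simpa [haS] using fun haV (h : κ a = c) ↦ hc (h ▸ hmem haV)

theorem piecewise_filter_piecewise {d c : σ} {s : Finset σ} (hc : c ∉ s) {S V : Finset α}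
    (hSV : S ⊆ V) {κ : α → σ} (hκ : κ ∈ properColoringsOn G d s (V \ S)) :
    piecewise {a ∈ V | S.piecewise (fun _ ↦ c) κ a = c} (fun _ ↦ d)
      (S.piecewise (fun _ ↦ c) κ) = κ := by
  ext a
  have hmem := Finset.ext_iff.1 (filter_piecewise_eq G hc hSV hκ) a
  by_cases haS : a ∈ S
  · rw [piecewise_eq_of_mem _ _ _ (hmem.2 haS)]
    exact ((mem_properColoringsOn.1 hκ).2.1 a (by simp [haS])).symm
  · rw [piecewise_eq_of_notMem _ _ _ (mt hmem.1 haS), piecewise_eq_of_notMem _ _ _ haS]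

theorem piecewise_filter_mem_properColoringsOn {d c : σ} {s : Finset σ} {V : Finset α} {κ : α → σ}
    (hκ : κ ∈ properColoringsOn G d (insert c s) V) :
    piecewise {a ∈ V | κ a = c} (fun _ ↦ d) κ ∈
      properColoringsOn G d s (V \ {a ∈ V | κ a = c}) := by
  obtain ⟨hs, hd, hproper⟩ := mem_properColoringsOn.1 hκ
  rw [mem_properColoringsOn]
  refine ⟨fun a ha ↦ ?_, fun a ha ↦ ?_, fun a ha b hb hadj ↦ ?_⟩
  · rw [piecewise_eq_of_notMem _ _ _ (mem_sdiff.1 ha).2]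
    have := hs a (mem_sdiff.1 ha).1
    simp_all
  · by_cases haV : a ∈ V <;> simp_all
  · rw [piecewise_eq_of_notMem _ _ _ (mem_sdiff.1 ha).2,
      piecewise_eq_of_notMem _ _ _ (mem_sdiff.1 hb).2]
    exact hproper a (mem_sdiff.1 ha).1 b (mem_sdiff.1 hb).1 hadj

theorem chromaticSum_insert (q : R) (x : σ → R) (d : σ) {c : σ} {s : Finset σ}
    (hc : ∀ c' ∈ s, c < c') (V : Finset α) :
    chromaticSum G q x d (insert c s) V = ∑ S ∈ indepSubsets G V,
      x c ^ #S * (q ^ ascents G S (V \ S) * chromaticSum G q x d s (V \ S)) := by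
  have hcs : c ∉ s := fun h ↦ (hc c h).false
  simp only [chromaticSum, mul_sum]
  rw [sum_sigma']
  symm
  refine sum_bij' (fun p _ ↦ p.1.piecewise (fun _ ↦ c) p.2)
    (fun κ _ ↦ ⟨{a ∈ V | κ a = c}, piecewise {a ∈ V | κ a = c} (fun _ ↦ d) κ⟩) ?_ ?_ ?_ ?_ ?_
  · rintro ⟨S, κ⟩ h
    exact piecewise_mem_properColoringsOn G hcs (mem_sigma.1 h).1 (mem_sigma.1 h).2
  · intro κ hκ
    exact mem_sigma.2
      ⟨filter_eq_mem_indepSubsets G hκ, piecewise_filter_mem_properColoringsOn G hκ⟩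
  · rintro ⟨S, κ⟩ h
    rw [mem_sigma] at h
    obtain ⟨hS, hκ⟩ := h
    exact Sigma.ext (filter_piecewise_eq G hcs (mem_indepSubsets.1 hS).1 hκ)
      (heq_of_eq (piecewise_filter_piecewise G hcs (mem_indepSubsets.1 hS).1 hκ))
  · intro κ _
    ext a
    by_cases ha : a ∈ V ∧ κ a = c <;> simp_all
  · rintro ⟨S, κ⟩ h
    rw [mem_sigma] at h
    obtain ⟨hS, hκ⟩ := h
    have hSV := (mem_indepSubsets.1 hS).1
    rw [colorAscents_piecewise G hSV fun a ha ↦ hc _ ((mem_properColoringsOn.1 hκ).1 a ha),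
      prod_apply_piecewise_const x κ c hSV, pow_add]
    ring

end Coloring

section Orientation

variable {n : ℕ} {r : Fin n → Fin n → Bool}

/-- The sources of the orientation `r` restricted to `V`. -/
def sources (r : Fin n → Fin n → Bool) (V : Finset (Fin n)) : Finset (Fin n) :=
  {v ∈ V | ∀ u ∈ V, ¬ r u v = true}

theorem mem_sources {V : Finset (Fin n)} {v : Fin n} :
    v ∈ sources r V ↔ v ∈ V ∧ ∀ u ∈ V, ¬ r u v = true := mem_filter

theorem numSources_coe (r : Fin n → Fin n → Bool) (V : Finset (Fin n)) :
    numSources n r V = #(sources r V) := by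
  rw [numSources, ← Set.ncard_coe_finset]
  congr 1
  ext v
  simp [mem_sources]

theorem peel_coe (r : Fin n → Fin n → Bool) (V : Finset (Fin n)) :
    peel n r V = ↑(V \ sources r V) := by
  ext v
  simp only [peel, Set.mem_ofPred_eq, mem_coe, mem_sdiff, mem_sources]
  grind

theorem sources_congr {r' : Fin n → Fin n → Bool} {V : Finset (Fin n)}
    (h : ∀ a ∈ V, ∀ b ∈ V, r a b = r' a b) : sources r V = sources r' V :=
  filter_congr fun v hv ↦ forall₂_congr fun u hu ↦ by rw [h u hu v hv]

/-- The source sequence of `r` restricted to `V` begins with at least `k` entries equal to `2`. -/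
def LeadingTwos (r : Fin n → Fin n → Bool) (V : Set (Fin n)) (k : ℕ) : Prop :=
  ∀ j < k, numSources n r ((peel n r)^[j] V) = 2

@[simp]
theorem leadingTwos_zero (V : Set (Fin n)) : LeadingTwos r V 0 :=
  fun j hj ↦ absurd hj j.not_lt_zero

theorem leadingTwos_succ {V : Finset (Fin n)} {k : ℕ} :
    LeadingTwos r V (k + 1) ↔
      #(sources r V) = 2 ∧ LeadingTwos r ↑(V \ sources r V) k := by
  rw [← numSources_coe, ← peel_coe, LeadingTwos, Nat.forall_lt_succ_left]
  rfl

theorem leadingTwos_congr {r' : Fin n → Fin n → Bool} {k : ℕ} {V : Finset (Fin n)}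
    (h : ∀ a ∈ V, ∀ b ∈ V, r a b = r' a b) : LeadingTwos r V k ↔ LeadingTwos r' V k := by
  induction k generalizing V with
  | zero => simp
  | succ k ih =>
    rw [leadingTwos_succ, leadingTwos_succ, sources_congr h, ih]
    exact fun a ha b hb ↦ h a (sdiff_subset ha) b (sdiff_subset hb)

variable (G : SimpleGraph (Fin n))

open scoped Classical in
/-- The acyclic orientations of the subgraph of `G` induced on `V`, seen as relations on all
vertices. -/
def orientationsOn (V : Finset (Fin n)) : Finset (Fin n → Fin n → Bool) :=
  {r | IsAcyclicOrientation n (fun a b ↦ G.Adj a b ∧ a ∈ V ∧ b ∈ V) r}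

variable {G} {S V : Finset (Fin n)}

theorem mem_orientationsOn :
    r ∈ orientationsOn G V ↔
      IsAcyclicOrientation n (fun a b ↦ G.Adj a b ∧ a ∈ V ∧ b ∈ V) r := by
  classical
  rw [orientationsOn, mem_filter, and_iff_right (mem_univ r)]

theorem adj_and_mem_of_mem_orientationsOn (hr : r ∈ orientationsOn G V) {a b : Fin n}
    (h : r a b = true) : G.Adj a b ∧ a ∈ V ∧ b ∈ V :=
  (mem_orientationsOn.1 hr).1 a b h

theorem orientationsOn_empty : orientationsOn G ∅ = {fun _ _ ↦ false} := by
  ext r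
  rw [mem_orientationsOn, mem_singleton]
  refine ⟨fun hr ↦ ?_, ?_⟩
  · ext a b
    simpa using hr.1 a b
  · rintro rfl
    refine ⟨by simp, by simp, fun a h ↦ ?_⟩
    obtain ⟨b, h, -⟩ := Relation.TransGen.head'_iff.1 h
    exact Bool.false_ne_true h

theorem sources_nonempty (hr : r ∈ orientationsOn G V) (hV : V.Nonempty) :
    (sources r V).Nonempty := by
  have : Std.Irrefl (Relation.TransGen fun u v ↦ r u v = true) :=
    ⟨(mem_orientationsOn.1 hr).2.2⟩
  have hwf := Finite.wellFounded_of_trans_of_irrefl (Relation.TransGen fun u v ↦ r u v = true)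
  obtain ⟨m, hm, hmin⟩ := hwf.has_min (V : Set (Fin n)) hV
  exact ⟨m, mem_sources.2 ⟨hm, fun u hu h ↦ hmin u hu (.single h)⟩⟩

theorem sources_mem_indepSubsets [DecidableRel G.Adj] (hr : r ∈ orientationsOn G V) :
    sources r V ∈ indepSubsets G V := by
  refine mem_indepSubsets.2 ⟨filter_subset .., fun a ha b hb _ hab ↦ ?_⟩
  obtain ⟨ha, hsrc_a⟩ := mem_sources.1 ha
  obtain ⟨hb, hsrc_b⟩ := mem_sources.1 hb
  exact hsrc_b a ha (((mem_orientationsOn.1 hr).2.1 a b ⟨hab, ha, hb⟩).2 (hsrc_a b hb))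

theorem subset_sources_iff_of_card_eq_two (h₃ : G.IndepSetFree 3) (hS : #S = 2)
    (hr : r ∈ orientationsOn G V) :
    S ⊆ sources r V ↔ sources r V = S := by
  classical
  refine ⟨fun h ↦ (eq_of_subset_of_card_le h ?_).symm, fun h ↦ h.superset⟩
  have := card_lt_of_mem_indepSubsets h₃ (sources_mem_indepSubsets hr)
  omega

/-- The orientation `r` with all edges at `S` dropped. -/
def deleteSources (S : Finset (Fin n)) (r : Fin n → Fin n → Bool) (a b : Fin n) : Bool :=
  r a b && (decide (a ∉ S) && decide (b ∉ S))

theorem deleteSources_eq_true {a b : Fin n} :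
    deleteSources S r a b = true ↔ r a b = true ∧ a ∉ S ∧ b ∉ S := by
  simp only [deleteSources, Bool.and_eq_true, decide_eq_true_eq]

theorem deleteSources_mem_orientationsOn (hr : r ∈ orientationsOn G V) :
    deleteSources S r ∈ orientationsOn G (V \ S) := by
  obtain ⟨hadj, horient, hacyclic⟩ := mem_orientationsOn.1 hr
  refine mem_orientationsOn.2 ⟨fun a b h ↦ ?_, fun a b h ↦ ?_, fun a h ↦ ?_⟩
  · obtain ⟨h, ha, hb⟩ := deleteSources_eq_true.1 h
    simp_all [hadj a b h]
  · simp only [mem_sdiff] at h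
    simp only [deleteSources_eq_true]
    have := horient a b
    tauto
  · exact hacyclic a (.mono (fun u v huv ↦ (deleteSources_eq_true.1 huv).1) a a h)

variable [DecidableRel G.Adj]

variable (G S V) in
/-- The orientation `r` of `G` on `V \ S` extended to `V` by making every vertex of `S` a
source. -/
def addSources (r : Fin n → Fin n → Bool) (a b : Fin n) : Bool :=
  r a b || decide (a ∈ S ∧ b ∈ V \ S ∧ G.Adj a b)

theorem addSources_eq_true {a b : Fin n} :
    addSources G S V r a b = true ↔ r a b = true ∨ a ∈ S ∧ b ∈ V \ S ∧ G.Adj a b := by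
  simp only [addSources, Bool.or_eq_true, decide_eq_true_eq]

theorem notMem_of_addSources (hr : r ∈ orientationsOn G (V \ S)) {a b : Fin n}
    (h : addSources G S V r a b = true) : b ∉ S := by
  obtain h | h := addSources_eq_true.1 h
  · exact (mem_sdiff.1 (adj_and_mem_of_mem_orientationsOn hr h).2.2).2
  · exact (mem_sdiff.1 h.2.1).2

theorem addSources_of_notMem {a b : Fin n} (ha : a ∉ S) : addSources G S V r a b = r a b := by
  simp [addSources, ha]

theorem transGen_of_transGen_addSources (hr : r ∈ orientationsOn G (V \ S)) {a b : Fin n}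
    (ha : a ∉ S) (h : Relation.TransGen (fun u v ↦ addSources G S V r u v = true) a b) :
    Relation.TransGen (fun u v ↦ r u v = true) a b := by
  suffices Relation.TransGen (fun u v ↦ r u v = true) a b ∧ b ∉ S from this.1
  induction h with
  | single h =>
    exact ⟨.single ((addSources_of_notMem ha).symm.trans h), notMem_of_addSources hr h⟩
  | tail _ h ih =>
    exact ⟨ih.1.tail ((addSources_of_notMem ih.2).symm.trans h), notMem_of_addSources hr h⟩

theorem addSources_mem_orientationsOn (hS : S ∈ indepSubsets G V)
    (hr : r ∈ orientationsOn G (V \ S)) : addSources G S V r ∈ orientationsOn G V := by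
  obtain ⟨hSV, hS⟩ := mem_indepSubsets.1 hS
  obtain ⟨hadj, horient, hacyclic⟩ := mem_orientationsOn.1 hr
  refine mem_orientationsOn.2 ⟨fun a b h ↦ ?_, fun a b ⟨hab, ha, hb⟩ ↦ ?_, fun a h ↦ ?_⟩
  · obtain h | ⟨ha, hb, hab⟩ := addSources_eq_true.1 h
    · exact (hadj a b h).imp_right <| .imp (sdiff_subset ·) (sdiff_subset ·)
    · exact ⟨hab, hSV ha, sdiff_subset hb⟩
  · have hindep : a ∈ S → b ∉ S := fun haS hbS ↦ hS haS hbS hab.ne hab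
    have hab' := hadj a b
    have hba' := hadj b a
    have h := horient a b
    simp only [mem_sdiff] at hab' hba' h
    simp only [addSources_eq_true, mem_sdiff, hab, hab.symm, ha, hb]
    grind
  · obtain ⟨c, -, hc⟩ := Relation.TransGen.tail'_iff.1 h
    exact hacyclic a (transGen_of_transGen_addSources hr (notMem_of_addSources hr hc) h)

theorem subset_sources_addSources (hSV : S ⊆ V) (hr : r ∈ orientationsOn G (V \ S)) :
    S ⊆ sources (addSources G S V r) V :=
  fun _ hv ↦ mem_sources.2 ⟨hSV hv, fun _ _ h ↦ notMem_of_addSources hr h hv⟩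

theorem deleteSources_addSources (hr : r ∈ orientationsOn G (V \ S)) :
    deleteSources S (addSources G S V r) = r := by
  ext a b
  rw [Bool.eq_iff_iff, deleteSources_eq_true, addSources_eq_true]
  have := adj_and_mem_of_mem_orientationsOn hr (a := a) (b := b)
  simp only [mem_sdiff] at this ⊢
  tauto

theorem addSources_deleteSources (hr : r ∈ orientationsOn G V) (hS : S ⊆ sources r V) :
    addSources G S V (deleteSources S r) = r := by
  ext a b
  rw [Bool.eq_iff_iff, addSources_eq_true, deleteSources_eq_true, mem_sdiff]
  have hadj := adj_and_mem_of_mem_orientationsOn hr (a := a) (b := b)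
  have horient := (mem_orientationsOn.1 hr).2.1 a b
  have ha (h : a ∈ S) := mem_sources.1 (hS h)
  have hb (h : b ∈ S) := (mem_sources.1 (hS h)).2 a
  have hba (h : a ∈ S) := (ha h).2 b
  tauto

theorem sum_addSources {M : Type*} [AddCommMonoid M] (hS : S ∈ indepSubsets G V)
    (f : (Fin n → Fin n → Bool) → M) :
    ∑ r ∈ orientationsOn G (V \ S), f (addSources G S V r) =
      ∑ r ∈ orientationsOn G V with S ⊆ sources r V, f r := by
  refine sum_nbij' (addSources G S V) (deleteSources S) (fun r hr ↦ ?_) (fun r hr ↦ ?_)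
    (fun r hr ↦ deleteSources_addSources hr) (fun r hr ↦ ?_) fun _ _ ↦ rfl
  · exact mem_filter.2 ⟨addSources_mem_orientationsOn hS hr,
      subset_sources_addSources (mem_indepSubsets.1 hS).1 hr⟩
  · exact deleteSources_mem_orientationsOn (mem_filter.1 hr).1
  · exact addSources_deleteSources (mem_filter.1 hr).1 (mem_filter.1 hr).2

theorem ascOrient_addSources (hr : r ∈ orientationsOn G (V \ S)) :
    ascOrient n (addSources G S V r) = ascents G S (V \ S) + ascOrient n r := by
  rw [ascOrient, ascents, ascOrient, ← Set.ncard_coe_finset, ← Set.ncard_union_eq]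
  · congr 1
    ext ⟨a, b⟩
    simp only [addSources_eq_true, Set.mem_ofPred_eq, Set.mem_union, coe_filter, mem_product,
      Fin.lt_def]
    tauto
  · rw [Set.disjoint_left]
    rintro ⟨a, b⟩ h h'
    simp only [coe_filter, mem_product, Set.mem_ofPred_eq] at h h'
    exact (mem_sdiff.1 (adj_and_mem_of_mem_orientationsOn hr h'.1).2.1).2 h.1.1

end Orientation

section OrientationSum

variable {n : ℕ} (G : SimpleGraph (Fin n)) {R : Type*} [CommSemiring R] (q : R)

open scoped Classical in
/-- The generating function, by ascents, of the acyclic orientations of `G` on `V` whose source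
sequence begins with at least `k` entries equal to `2`. -/
def orientationSum (k : ℕ) (V : Finset (Fin n)) : R :=
  ∑ r ∈ orientationsOn G V with LeadingTwos r V k, q ^ ascOrient n r

theorem orientationSum_zero (V : Finset (Fin n)) :
    orientationSum G q 0 V = ∑ r ∈ orientationsOn G V, q ^ ascOrient n r := by
  simp [orientationSum]

variable [DecidableRel G.Adj]

theorem pow_mul_orientationSum_zero {S V : Finset (Fin n)} (hS : S ∈ indepSubsets G V) :
    q ^ ascents G S (V \ S) * orientationSum G q 0 (V \ S) =
      ∑ r ∈ orientationsOn G V with S ⊆ sources r V, q ^ ascOrient n r := by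
  rw [orientationSum_zero, mul_sum, ← sum_addSources hS]
  refine sum_congr rfl fun r hr ↦ ?_
  rw [ascOrient_addSources hr, pow_add]

theorem sum_indepSubsets_neg_one_pow_mul_orientationSum {R : Type*} [CommRing R] (q : R)
    (V : Finset (Fin n)) :
    ∑ S ∈ indepSubsets G V,
        (-1) ^ #S * (q ^ ascents G S (V \ S) * orientationSum G q 0 (V \ S)) =
      (Pi.single ∅ 1 : Finset (Fin n) → R) V := by
  calc
    _ = ∑ S ∈ indepSubsets G V, ∑ r ∈ orientationsOn G V with S ⊆ sources r V,
          (-1) ^ #S * q ^ ascOrient n r :=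
      sum_congr rfl fun S hS ↦ by rw [pow_mul_orientationSum_zero G q hS, mul_sum]
    _ = ∑ r ∈ orientationsOn G V, ∑ S ∈ (sources r V).powerset,
          (-1) ^ #S * q ^ ascOrient n r := by
      refine sum_comm' fun S r ↦ ?_
      rw [mem_filter, mem_powerset, mem_indepSubsets]
      refine ⟨fun h ↦ ⟨h.2.2, h.2.1⟩, fun ⟨hS, hr⟩ ↦ ⟨?_, hr, hS⟩⟩
      obtain ⟨hsub, hindep⟩ := mem_indepSubsets.1 (sources_mem_indepSubsets hr)
      exact ⟨hS.trans hsub, hindep.mono (coe_subset.2 hS)⟩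
    _ = (Pi.single ∅ 1 : Finset (Fin n) → R) V := by
      simp only [← sum_mul]
      obtain rfl | hV := V.eq_empty_or_nonempty
      · simp [orientationsOn_empty, sources, ascOrient]
      · rw [Pi.single_eq_of_ne hV.ne_empty]
        refine sum_eq_zero fun r hr ↦ ?_
        have := congr_arg (Int.cast : ℤ → R)
          (sum_powerset_neg_one_pow_card_of_nonempty (sources_nonempty hr hV))
        push_cast at this
        rw [this, zero_mul]

variable {G}

theorem orientationSum_sub_removeIndep {R : Type*} [CommRing R] (q : R)
    (h₃ : G.IndepSetFree 3) :
    orientationSum G q 0 - removeIndep G q 1 (orientationSum G q 0) +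
      removeIndep G q 2 (orientationSum G q 0) = Pi.single ∅ 1 := by
  ext V
  rw [← sum_indepSubsets_neg_one_pow_mul_orientationSum G q V,
    sum_indepSubsets_pow_card_mul h₃]
  simp only [sum_range_succ, sum_range_zero, removeIndep_zero, Module.End.one_apply,
    Pi.add_apply, Pi.sub_apply]
  ring

open scoped Classical in
theorem pow_mul_orientationSum (h₃ : G.IndepSetFree 3) {S V : Finset (Fin n)}
    (hS : S ∈ indepSubsets G V) (hcard : #S = 2) (k : ℕ) :
    q ^ ascents G S (V \ S) * orientationSum G q k (V \ S) =
      ∑ r ∈ orientationsOn G V with LeadingTwos r V (k + 1) ∧ sources r V = S,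
        q ^ ascOrient n r := by
  let f (r : Fin n → Fin n → Bool) := if LeadingTwos r V (k + 1) then q ^ ascOrient n r else 0
  have hf {r} (hr : r ∈ orientationsOn G (V \ S)) : f (addSources G S V r) =
      q ^ ascents G S (V \ S) * if LeadingTwos r ↑(V \ S) k then q ^ ascOrient n r else 0 := by
    have hsrc : sources (addSources G S V r) V = S :=
      (subset_sources_iff_of_card_eq_two h₃ hcard (addSources_mem_orientationsOn hS hr)).1
        (subset_sources_addSources (mem_indepSubsets.1 hS).1 hr)
    have hlead : LeadingTwos (addSources G S V r) V (k + 1) ↔ LeadingTwos r ↑(V \ S) k := by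
      rw [leadingTwos_succ, hsrc, and_iff_right hcard]
      exact leadingTwos_congr fun a ha b _ ↦ addSources_of_notMem (mem_sdiff.1 ha).2
    simp only [f, hlead, ascOrient_addSources hr, pow_add, mul_ite, mul_zero]
  calc
    _ = ∑ r ∈ orientationsOn G (V \ S), f (addSources G S V r) := by
      rw [orientationSum, sum_filter, mul_sum]
      exact sum_congr rfl fun r hr ↦ (hf hr).symm
    _ = ∑ r ∈ orientationsOn G V with S ⊆ sources r V, f r := sum_addSources hS f
    _ = _ := by
      rw [← sum_filter, filter_filter]
      refine sum_congr (filter_congr fun r hr ↦ ?_) fun _ _ ↦ rfl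
      rw [subset_sources_iff_of_card_eq_two h₃ hcard hr, and_comm]

theorem removeIndep_two_orientationSum (h₃ : G.IndepSetFree 3) (k : ℕ) :
    removeIndep G q 2 (orientationSum G q k) = orientationSum G q (k + 1) := by
  classical
  ext V
  have hmaps {r} (hr : r ∈ {r ∈ orientationsOn G V | LeadingTwos r V (k + 1)}) :
      sources r V ∈ {S ∈ V.powerset | G.IsNIndepSet 2 S} := by
    rw [mem_filter, leadingTwos_succ] at hr
    obtain ⟨hsub, hindep⟩ := mem_indepSubsets.1 (sources_mem_indepSubsets hr.1)
    exact mem_filter.2 ⟨mem_powerset.2 hsub, hindep, hr.2.1⟩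
  rw [removeIndep_apply, orientationSum, ← sum_fiberwise_of_maps_to fun r hr ↦ hmaps hr]
  refine sum_congr rfl fun S hS ↦ ?_
  obtain ⟨hSV, hindep, hcard⟩ := mem_filter.1 hS
  rw [pow_mul_orientationSum q h₃ (mem_indepSubsets.2 ⟨mem_powerset.1 hSV, hindep⟩) hcard,
    filter_filter]

theorem removeIndep_two_pow_orientationSum (h₃ : G.IndepSetFree 3) (k : ℕ) :
    (removeIndep G q 2 ^ k) (orientationSum G q 0) = orientationSum G q k := by
  induction k with
  | zero => rfl
  | succ k ih => rw [pow_succ', Module.End.mul_apply, ih, removeIndep_two_orientationSum q h₃]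

end OrientationSum

section TwoColumnExpansion

variable {α R : Type*} [LinearOrder α] [CommRing R] {G : SimpleGraph α}
  [DecidableRel G.Adj] {q : R} {f : Finset α → R}

theorem twoColumnSchur_mul_removeIndep_one (hG : IsNaturalUnitInterval G)
    (hf : f - removeIndep G q 1 f + removeIndep G q 2 f = Pi.single ∅ 1) (m : Multiset R)
    (k : ℕ) (V : Finset α) :
    twoColumnSchur m (#V - 1) k * removeIndep G q 1 ((removeIndep G q 2 ^ k) f) V =
      twoColumnSchur m (#V - 1) k *
        ((removeIndep G q 2 ^ k) f V + (removeIndep G q 2 ^ (k + 1)) f V) := by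
  have hsingle : twoColumnSchur m (#V - 1) k *
      (removeIndep G q 2 ^ k) (Pi.single ∅ 1 : Finset α → R) V = 0 := by
    by_cases hV : #V = 2 * k
    · rw [hV, Nat.cast_mul, Nat.cast_ofNat, twoColumnSchur_two_mul_sub_one, zero_mul]
    · refine mul_eq_zero_of_right _ (removeIndep_pow_apply_eq_zero G q fun W hW ↦ ?_)
      have hW : W ≠ ∅ := by rintro rfl; exact hV (by simpa using hW.symm)
      exact Pi.single_eq_of_ne hW 1
  have hone : removeIndep G q 1 f = f + removeIndep G q 2 f - Pi.single ∅ 1 := by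
    rw [← hf]; abel
  rw [← Module.End.mul_apply, ((hG.commute_removeIndep q).pow_right k).eq, Module.End.mul_apply,
    hone, map_sub, map_add, ← Module.End.mul_apply, ← pow_succ, Pi.sub_apply, mul_sub, hsingle,
    sub_zero, Pi.add_apply]

variable [Fintype α]

variable (G q) in
/-- The combination of the iterates of `removeIndep G q 2` on `f` with two-column Schur functions
as coefficients; terms with `k > card α` would vanish. -/
def twoColumnExpansion (m : Multiset R) (f : Finset α → R) : Finset α → R :=
  ∑ k ∈ range (Fintype.card α + 1),
    fun V ↦ twoColumnSchur m #V k * (removeIndep G q 2 ^ k) f V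

theorem twoColumnExpansion_apply (m : Multiset R) (f : Finset α → R) (V : Finset α) :
    twoColumnExpansion G q m f V = ∑ k ∈ range (Fintype.card α + 1),
      twoColumnSchur m #V k * (removeIndep G q 2 ^ k) f V := by
  rw [twoColumnExpansion, Finset.sum_apply]

theorem removeIndep_twoColumnExpansion (m : Multiset R) (f : Finset α → R) (j : ℕ)
    (V : Finset α) :
    removeIndep G q j (twoColumnExpansion G q m f) V = ∑ k ∈ range (Fintype.card α + 1),
      twoColumnSchur m (#V - j) k * removeIndep G q j ((removeIndep G q 2 ^ k) f) V := by
  rw [twoColumnExpansion, map_sum, Finset.sum_apply]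
  exact sum_congr rfl fun k _ ↦ removeIndep_mul_card G q j (twoColumnSchur m · k) _ V

theorem sum_range_mul_removeIndep_pow_succ {R : Type*} [CommSemiring R] {q : R}
    (f : Finset α → R) (V : Finset α) {g : ℤ → R} (hg : g (-1) = 0) :
    ∑ k ∈ range (Fintype.card α + 1), g k * (removeIndep G q 2 ^ (k + 1)) f V =
      ∑ k ∈ range (Fintype.card α + 1), g (k - 1) * (removeIndep G q 2 ^ k) f V := by
  have hlast : (removeIndep G q 2 ^ (Fintype.card α + 1)) f V = 0 :=
    removeIndep_pow_apply_eq_zero G q fun W hW ↦ by have := V.card_le_univ; lia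
  rw [sum_range_succ, sum_range_succ', hlast]
  simp [hg]

theorem twoColumnExpansion_cons (hG : IsNaturalUnitInterval G)
    (hf : f - removeIndep G q 1 f + removeIndep G q 2 f = Pi.single ∅ 1) (m : Multiset R)
    (x : R) :
    twoColumnExpansion G q (x ::ₘ m) f = twoColumnExpansion G q m f +
      x • removeIndep G q 1 (twoColumnExpansion G q m f) +
      x ^ 2 • removeIndep G q 2 (twoColumnExpansion G q m f) := by
  ext V
  simp only [Pi.add_apply, Pi.smul_apply, smul_eq_mul, removeIndep_twoColumnExpansion,
    twoColumnExpansion_apply, Nat.cast_one, Nat.cast_ofNat,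
    twoColumnSchur_mul_removeIndep_one hG hf, mul_add, sum_add_distrib]
  simp only [← Module.End.mul_apply, ← pow_succ']
  rw [sum_range_mul_removeIndep_pow_succ f V (twoColumnSchur_of_neg m (#V - 1) (by simp)),
    sum_range_mul_removeIndep_pow_succ f V (twoColumnSchur_of_neg m (#V - 2) (by simp))]
  simp only [twoColumnSchur_cons, mul_sum, ← sum_add_distrib]
  exact sum_congr rfl fun k _ ↦ by ring

theorem twoColumnExpansion_zero_left
    (hf : f - removeIndep G q 1 f + removeIndep G q 2 f = Pi.single ∅ 1) :
    twoColumnExpansion G q 0 f = Pi.single ∅ 1 := by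
  ext V
  rw [twoColumnExpansion_apply]
  obtain rfl | hV := V.eq_empty_or_nonempty
  · have hremove {j : ℕ} (hj : j ≠ 0) (k : ℕ) : (removeIndep G q j ^ (k + 1)) f ∅ = 0 :=
      removeIndep_pow_apply_eq_zero G q fun W hW ↦ by simp [hj] at hW
    have hempty : f ∅ = 1 := by
      have h₁ := hremove one_ne_zero 0
      have h₂ := hremove two_ne_zero 0
      rw [zero_add, pow_one] at h₁ h₂
      simpa [h₁, h₂] using congr_fun hf ∅
    rw [sum_range_succ', sum_eq_zero fun k _ ↦ by rw [hremove two_ne_zero, mul_zero]]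
    simp [twoColumnSchur, intEsymm_zero_left, hempty]
  · rw [Pi.single_eq_of_ne hV.ne_empty]
    exact sum_eq_zero fun k _ ↦ by
      rw [twoColumnSchur_zero_left (mod_cast hV.card_ne_zero), zero_mul]

theorem chromaticSum_eq_twoColumnExpansion {σ : Type*} [LinearOrder σ]
    (hG : IsNaturalUnitInterval G) (h₃ : G.IndepSetFree 3)
    (hf : f - removeIndep G q 1 f + removeIndep G q 2 f = Pi.single ∅ 1) (x : σ → R) (d : σ)
    (s : Finset σ) :
    chromaticSum G q x d s = twoColumnExpansion G q (s.val.map x) f := by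
  induction s using Finset.induction_on_min with
  | empty => rw [chromaticSum_empty_colors, empty_val, Multiset.map_zero,
      twoColumnExpansion_zero_left hf]
  | insert c s hc ih =>
    rw [insert_val_of_notMem fun h ↦ (hc c h).false, Multiset.map_cons,
      twoColumnExpansion_cons hG hf, ← ih]
    ext V
    rw [chromaticSum_insert G q x d hc, sum_indepSubsets_pow_card_mul h₃]
    simp [sum_range_succ, removeIndep_zero]

end TwoColumnExpansion

section Universal

variable {n : ℕ} {G : SimpleGraph (Fin n)}

theorem initialA_le (r : Fin n → Fin n → Bool) : initialA n r ≤ n :=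
  Finset.sup_le fun _ hj ↦ Nat.lt_succ_iff.1 (mem_range.1 (mem_filter.1 hj).1)

open scoped Classical in
theorem leadingTwos_univ_iff (r : Fin n → Fin n → Bool) {k : ℕ} (hk : k < n + 1) :
    LeadingTwos r Set.univ k ↔ k ≤ initialA n r := by
  refine ⟨fun h ↦ le_sup (f := id) (mem_filter.2 ⟨mem_range.2 hk, h⟩), fun h j hj ↦ ?_⟩
  obtain ⟨i, hi, hinit⟩ := exists_mem_eq_sup
    {i ∈ range (n + 1) | ∀ j < i, numSources n r ((peel n r)^[j] Set.univ) = 2}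
    ⟨0, by simp⟩ id
  replace hinit : initialA n r = i := hinit
  exact (mem_filter.1 hi).2 j (hj.trans_le (h.trans hinit.le))

open scoped Classical in
theorem orientationsOn_univ :
    orientationsOn G univ = univ.filter fun r ↦ IsAcyclicOrientation n G.Adj r := by
  ext r
  simp [mem_orientationsOn]

theorem twoColumnExpansion_orientationSum_univ [DecidableRel G.Adj] {R : Type*} [CommRing R]
    (h₃ : G.IndepSetFree 3) (q : R) (m : Multiset R) :
    twoColumnExpansion G q m (orientationSum G q 0) univ =
      ∑ r ∈ orientationsOn G univ,
        q ^ ascOrient n r * (m.esymm (n - initialA n r) * m.esymm (initialA n r)) := by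
  classical
  have hinitial (r : Fin n → Fin n → Bool) :
      {k ∈ range (n + 1) | LeadingTwos r ↑(univ : Finset (Fin n)) k} =
        range (initialA n r + 1) := by
    ext k
    have := initialA_le r
    rw [mem_filter, mem_range, mem_range, coe_univ]
    exact ⟨fun h ↦ Nat.lt_succ_iff.2 ((leadingTwos_univ_iff r h.1).1 h.2),
      fun h ↦ ⟨by lia, (leadingTwos_univ_iff r (by lia)).2 (Nat.lt_succ_iff.1 h)⟩⟩
  have hesymm (r : Fin n → Fin n → Bool) :
      ∑ k ∈ range (initialA n r + 1), twoColumnSchur m n k =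
        m.esymm (n - initialA n r) * m.esymm (initialA n r) := by
    rw [sum_range_twoColumnSchur, ← Nat.cast_sub (initialA_le r), intEsymm_natCast,
      intEsymm_natCast]
  simp only [twoColumnExpansion_apply, removeIndep_two_pow_orientationSum q h₃, orientationSum,
    Fintype.card_fin, card_univ, sum_filter, mul_sum]
  rw [sum_comm]
  refine sum_congr rfl fun r _ ↦ ?_
  rw [← hesymm, ← hinitial, mul_sum, sum_filter]
  exact sum_congr rfl fun k _ ↦ by split_ifs <;> ring

end Universal

section ChromaticQuasisymmetric

variable {α : Type*} [LinearOrder α] [Fintype α] (G : SimpleGraph α) [DecidableRel G.Adj]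
  {σ : Type*} [LinearOrder σ] [Fintype σ] {R : Type*} [CommSemiring R]

/-- The chromatic quasisymmetric polynomial of `G` with set of colors `σ`. -/
def chromaticQuasisymmetric (q : R) : MvPolynomial σ R :=
  ∑ κ : α → σ with ∀ a b, G.Adj a b → κ a ≠ κ b,
    MvPolynomial.C (q ^ colorAscents G κ univ) * ∏ a, MvPolynomial.X (κ a)

theorem chromaticQuasisymmetric_eq_chromaticSum (q : R) (d : σ) :
    chromaticQuasisymmetric G q =
      chromaticSum G (MvPolynomial.C q) MvPolynomial.X d univ univ := by
  rw [chromaticQuasisymmetric, chromaticSum]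
  refine sum_congr ?_ fun κ _ ↦ by rw [map_pow]
  ext κ
  simp [mem_properColoringsOn]

end ChromaticQuasisymmetric

section Dyck

theorem northBefore_mono (w : List Bool) : Monotone (northBefore w) := by
  intro i j hij
  induction w generalizing i j with
  | nil => rfl
  | cons b w ih =>
    cases b with
    | true => exact Nat.succ_le_succ (ih hij)
    | false =>
      cases i with
      | zero => exact Nat.zero_le _
      | succ i =>
        cases j with
        | zero => exact absurd hij i.not_succ_le_zero
        | succ j => exact ih (Nat.le_of_succ_le_succ hij)

/-- The Dyck graph `G(D)`. -/
def dyckGraph (n : ℕ) (D : List Bool) : SimpleGraph (Fin n) where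
  Adj := dyckAdj n D
  symm := ⟨fun _ _ ↦ Or.symm⟩
  loopless := ⟨by simp [dyckAdj]⟩

variable {n : ℕ} {D : List Bool}

theorem dyckGraph_adj_of_lt {a b : Fin n} (hab : a < b) :
    (dyckGraph n D).Adj a b ↔ (b : ℕ) < northBefore D a := by
  simp only [dyckGraph, dyckAdj]
  omega

theorem isNaturalUnitInterval_dyckGraph (n : ℕ) (D : List Bool) :
    IsNaturalUnitInterval (dyckGraph n D) := by
  intro a b c hab hbc hac
  rw [dyckGraph_adj_of_lt (hab.trans hbc)] at hac
  rw [dyckGraph_adj_of_lt hab, dyckGraph_adj_of_lt hbc]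
  have := northBefore_mono D (Fin.le_def.1 hab.le)
  omega

theorem lt_ellG {b : Fin n} (hb : northBefore D b < n) : (b : ℕ) < ellG n D := by
  rw [← Nat.add_one_le_iff, ← card_range (b + 1), ellG]
  refine card_le_card fun i hi ↦ ?_
  have := northBefore_mono D (Nat.lt_succ_iff.1 (mem_range.1 hi))
  simp only [mem_filter, mem_range] at hi ⊢
  omega

theorem indepSetFree_three_dyckGraph (hD : IsAbelian n D) :
    (dyckGraph n D).IndepSetFree 3 := by
  rintro S ⟨hS, hcard⟩
  obtain ⟨a, b, c, hab, hbc, rfl⟩ := exists_lt_lt_of_card_eq_three hcard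
  have hnab : ¬(dyckGraph n D).Adj a b := hS (by simp) (by simp) hab.ne
  have hnbc : ¬(dyckGraph n D).Adj b c := hS (by simp) (by simp) hbc.ne
  rw [dyckGraph_adj_of_lt hab] at hnab
  rw [dyckGraph_adj_of_lt hbc] at hnbc
  have hell : (b : ℕ) < ellG n D := lt_ellG (by omega)
  have h₀ := northBefore_mono D a.val.zero_le
  rw [IsAbelian, lamG, if_pos a.pos] at hD
  omega

open scoped Classical in
theorem chromX_eq_chromaticQuasisymmetric (n ν : ℕ) (D : List Bool) :
    chromX n ν D = chromaticQuasisymmetric (dyckGraph n D) qq := by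
  have hasc (κ : Fin n → Fin ν) : ascColor n ν D κ = colorAscents (dyckGraph n D) κ univ := by
    rw [ascColor, colorAscents, ← Set.ncard_coe_finset, coe_filter]
    simp [dyckGraph]
  rw [chromX, chromaticQuasisymmetric, sum_filter]
  exact sum_congr rfl fun κ _ ↦ by simp only [hasc]; congr

end Dyck

end AbelianChromatic

end

open AbelianChromatic Finset in
open scoped Classical in
theorem stmt12_general {n : ℕ} {G : SimpleGraph (Fin n)} [DecidableRel G.Adj]
    (hG : IsNaturalUnitInterval G) (h₃ : G.IndepSetFree 3) {R : Type*} [CommRing R] (q : R)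
    (σ : Type*) [LinearOrder σ] [Fintype σ] [Nonempty σ] :
    (chromaticQuasisymmetric G q : MvPolynomial σ R) =
      ∑ r : Fin n → Fin n → Bool with IsAcyclicOrientation n G.Adj r,
        MvPolynomial.C (q ^ ascOrient n r) *
          (MvPolynomial.esymm σ R (n - initialA n r) *
            MvPolynomial.esymm σ R (initialA n r)) := by
  obtain ⟨d⟩ := ‹Nonempty σ›
  rw [chromaticQuasisymmetric_eq_chromaticSum G q d,
    chromaticSum_eq_twoColumnExpansion hG h₃ (orientationSum_sub_removeIndep _ h₃),
    twoColumnExpansion_orientationSum_univ h₃, orientationsOn_univ]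
  simp only [map_pow, MvPolynomial.esymm_eq_multiset_esymm]

open scoped Classical in
/-- The `e`-expansion of `X_G` for an abelian Dyck graph, via acyclic
orientations. -/
theorem stmt12 (n : ℕ) (D : List Bool) (hD : IsDyck n D) (hab : IsAbelian n D)
    (ν : ℕ) (hν : 1 ≤ ν) :
    chromX n ν D =
      ∑ r ∈ Finset.univ.filter (fun r : Fin n → Fin n → Bool =>
          IsAcyclicOrientation n (dyckAdj n D) r),
        MvPolynomial.C (qq ^ ascOrient n r) *
          (MvPolynomial.esymm (Fin ν) F (n - initialA n r) *
            MvPolynomial.esymm (Fin ν) F (initialA n r)) := by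
  have : Nonempty (Fin ν) := Fin.pos_iff_nonempty.1 hν
  exact (AbelianChromatic.chromX_eq_chromaticQuasisymmetric n ν D).trans <| stmt12_general
    (AbelianChromatic.isNaturalUnitInterval_dyckGraph n D)
    (AbelianChromatic.indepSetFree_three_dyckGraph hab) qq (Fin ν)
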